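/- arXiv:1811.04830 — 3 statements merged into one kernel-verified Lean document; each statement's English description precedes it below -/
import Mathlib

section
/- For the matrices A and B of the local viscous coupling system, A is invertible, the matrix C = A⁻¹ B has all entries nonnegative, and each row of C sums to one: Σ_j C i j = 1 for every i ∈ Fin 4. -/
/-!
`A` is a monotone matrix: `(A v) k = v k - ω k * v (n k)`, where `n k` is the neighbour of `k`
chosen by `s k`. If `A v ≥ 0`, then at an index `k` where `v` is minimal
`v k ≥ ω k * v (n k) ≥ ω k * v k`, so `v k ≥ 0` because `ω k < 1`, and hence `v ≥ 0`.
Applied to `v` and `-v`, this minimum principle gives injectivity, hence invertibility, of `A`;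
applied to the columns of `C`, for which `A C = B ≥ 0`, it gives `C ≥ 0`.
Finally `A 1 = B 1`, both having entries `1 - ω k`, so `C 1 = A⁻¹ (B 1) = 1`.
-/

/-- Matrix `A` of the local viscous coupling system: unit diagonal, and one
nonzero off-diagonal entry `-ω k` per row, located at column `k-1` (cyclically)
if the total velocity at the `k`-th half interface is nonnegative (`s k = true`),
and at column `k+1` otherwise. -/
def viscousA (ω : Fin 4 → ℝ) (s : Fin 4 → Bool) : Matrix (Fin 4) (Fin 4) ℝ :=
  fun k j =>
    if j = k then 1
    else if s k then (if j = k - 1 then -ω k else 0)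
    else (if j = k + 1 then -ω k else 0)

/-- Matrix `B` of the local viscous coupling system: the only nonzero entry of
row `k` is `1 - ω k`, located at column `k` if `s k = true` and at column `k+1`
(cyclically) otherwise. -/
def viscousB (ω : Fin 4 → ℝ) (s : Fin 4 → Bool) : Matrix (Fin 4) (Fin 4) ℝ :=
  fun k j =>
    if s k then (if j = k then 1 - ω k else 0)
    else (if j = k + 1 then 1 - ω k else 0)

lemma viscousA_mulVec (ω : Fin 4 → ℝ) (s : Fin 4 → Bool) (v : Fin 4 → ℝ) (k : Fin 4) :
    (viscousA ω s).mulVec v k = v k - ω k * v (if s k then k - 1 else k + 1) := by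
  have hA : ∀ j, viscousA ω s k j = (if j = k then 1 else 0) +
      (if j = (if s k then k - 1 else k + 1) then -ω k else 0) := by
    intro j
    -- Modulo 4 neither neighbour of `k` is `k` itself, so the two entries do not overlap.
    have h1 : k ≠ k - 1 := by revert k; decide
    by_cases hj : j = k
    · subst hj
      cases h : s j <;> simp [viscousA, h1]
    · cases h : s k <;> simp [viscousA, h, hj]
  simp [Matrix.mulVec, dotProduct, hA, add_mul, Finset.sum_add_distrib, sub_eq_add_neg]

lemma viscousB_mulVec_one (ω : Fin 4 → ℝ) (s : Fin 4 → Bool) (k : Fin 4) :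
    (viscousB ω s).mulVec 1 k = 1 - ω k := by
  cases h : s k <;> simp [Matrix.mulVec, dotProduct, viscousB, h]

lemma viscousB_nonneg (ω : Fin 4 → ℝ) (s : Fin 4 → Bool) (hω : ∀ k, 0 ≤ ω k ∧ ω k < 1)
    (i j : Fin 4) : 0 ≤ viscousB ω s i j := by
  have := (hω i).2
  unfold viscousB
  split_ifs <;> linarith

/-- Minimum principle for `A`. -/
lemma nonneg_of_viscousA_mulVec_nonneg (ω : Fin 4 → ℝ) (s : Fin 4 → Bool)
    (hω : ∀ k, 0 ≤ ω k ∧ ω k < 1) (v : Fin 4 → ℝ)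
    (hv : ∀ k, 0 ≤ (viscousA ω s).mulVec v k) (i : Fin 4) : 0 ≤ v i := by
  obtain ⟨k, hk⟩ := Finite.exists_min v
  refine le_trans ?_ (hk i)
  obtain ⟨h0, h1⟩ := hω k
  have hA := hv k
  rw [viscousA_mulVec] at hA
  by_contra! hneg
  -- If `v k < 0`, then `ω k * v (n k) ≥ ω k * v k > v k`.
  nlinarith [mul_le_mul_of_nonneg_left (hk (if s k then k - 1 else k + 1)) h0]

theorem viscousC_nonneg_row_stochastic (ω : Fin 4 → ℝ) (s : Fin 4 → Bool)
    (hω : ∀ k, 0 ≤ ω k ∧ ω k < 1) :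
    IsUnit (viscousA ω s) ∧
    (∀ i j, 0 ≤ ((viscousA ω s)⁻¹ * viscousB ω s) i j) ∧
    (∀ i, ∑ j, ((viscousA ω s)⁻¹ * viscousB ω s) i j = 1) := by
  have hA : IsUnit (viscousA ω s) := by
    rw [← Matrix.mulVec_injective_iff_isUnit]
    intro v w hvw
    have hvw' : (viscousA ω s).mulVec v = (viscousA ω s).mulVec w := hvw
    ext i
    have h1 := nonneg_of_viscousA_mulVec_nonneg ω s hω (v - w)
      (fun k => by simp [Matrix.mulVec_sub, hvw']) i
    have h2 := nonneg_of_viscousA_mulVec_nonneg ω s hω (w - v)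
      (fun k => by simp [Matrix.mulVec_sub, hvw']) i
    simp only [Pi.sub_apply] at h1 h2
    linarith
  have hdet : IsUnit (viscousA ω s).det := (Matrix.isUnit_iff_isUnit_det _).1 hA
  refine ⟨hA, fun i j => ?_, fun i => ?_⟩
  · refine nonneg_of_viscousA_mulVec_nonneg ω s hω
      (fun l => ((viscousA ω s)⁻¹ * viscousB ω s) l j) (fun k => ?_) i
    change 0 ≤ (viscousA ω s * ((viscousA ω s)⁻¹ * viscousB ω s)) k j
    rw [Matrix.mul_nonsing_inv_cancel_left _ _ hdet]
    exact viscousB_nonneg ω s hω k j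
  · have hAB : (viscousB ω s).mulVec 1 = (viscousA ω s).mulVec 1 := by
      ext k
      simp [viscousA_mulVec, viscousB_mulVec_one]
    have hC : ((viscousA ω s)⁻¹ * viscousB ω s).mulVec 1 = 1 := by
      rw [← Matrix.mulVec_mulVec, hAB, Matrix.mulVec_mulVec, Matrix.nonsing_inv_mul _ hdet,
        Matrix.one_mulVec]
    simpa [Matrix.mulVec, dotProduct] using congrFun hC i
end

section
/- Let u₊ > 0 and u₋ ≥ 0 be real numbers and set ω = φ(u₋/u₊), where φ is the SMU4 limiter. Then 0 ≤ ω·u₊ ≤ u₋; in particular ω·u₊ − u₋ ≤ 0. -/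
/-- The fourth-order Smooth Multi-D Upstream (SMU4) limiter. -/
noncomputable def smu4 (r : ℝ) : ℝ :=
  (r^4 + r^3 + r^2 + r) / (r^4 + r^3 + r^2 + r + 1)

theorem smu4_nonneg {r : ℝ} (hr : 0 ≤ r) : 0 ≤ smu4 r := by
  unfold smu4
  positivity

/-- After clearing the denominator, the difference of the two sides is `r ^ 5`. -/
theorem smu4_le_self {r : ℝ} (hr : 0 ≤ r) : smu4 r ≤ r := by
  unfold smu4
  rw [div_le_iff₀ (by positivity)]
  linarith [pow_nonneg hr 5]

theorem smu4_viscous_weight_bound (up um : ℝ) (hup : 0 < up) (hum : 0 ≤ um) :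
    0 ≤ smu4 (um / up) * up ∧ smu4 (um / up) * up ≤ um := by
  have hr : 0 ≤ um / up := div_nonneg hum hup.le
  exact ⟨mul_nonneg (smu4_nonneg hr) hup.le, (le_div_iff₀ hup).mp (smu4_le_self hr)⟩
end

section
/- Let h(a, b) = a·b/(a + b). Let φ : (0, ∞) → [0, 1] satisfy φ(1/r) = φ(r)/r for every r > 0. Let T₊, T₋, Δz₊, Δz₋ be strictly positive reals, Δρ > 0, a > 0, a' > 0, ν > 0, and set ω₊ = φ((T₋·Δz₋)/(T₊·Δz₊)) and ω₋ = φ((T₊·Δz₊)/(T₋·Δz₋)). Let μ : ℝ → ℝ be differentiable, strictly positive, and nonincreasing. Then the function t ↦ T₊·[(1 − ω₊)·h(a, μ(t)) + ω₊·h(a', μ(t))]·Δρ·Δz₊ − T₋·[(1 − ω₋)·h(a', ν) + ω₋·h(a', μ(t))]·Δρ·Δz₋ is nonincreasing in t. -/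
/-!
Write `P = Tp * dzp` and `Q = Tm * dzm`. The limiter symmetry at `r = Q / P` gives `Q ω₋ = P ω₊`,
so the two terms containing `h(a', μ(t))` cancel. The flux is thus
`Δρ P (1 - ω₊) h(a, μ(t))` plus a constant, with a nonnegative coefficient since `ω₊ ≤ 1`, and
`h(a, ·)` is increasing on the positive reals while `μ` is nonincreasing.
-/

/-- Harmonic-type mobility product `h(a, b) = a·b/(a + b)` appearing in the
buoyancy flux. -/
noncomputable def hmob (a b : ℝ) : ℝ := a * b / (a + b)

theorem hmob_le_hmob {a b c : ℝ} (ha : 0 < a) (hb : 0 < b) (hbc : b ≤ c) :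
    hmob a b ≤ hmob a c := by
  unfold hmob
  rw [div_le_div_iff₀ (by linarith) (by linarith)]
  -- The difference of the cross products is `a² (c - b)`.
  nlinarith [mul_le_mul_of_nonneg_left hbc (sq_nonneg a)]

theorem buoyancy_flux_antitone_same_sign
    (phi : ℝ → ℝ)
    (hphi_mem : ∀ r : ℝ, 0 < r → phi r ∈ Set.Icc (0 : ℝ) 1)
    (hphi_sym : ∀ r : ℝ, 0 < r → phi (1 / r) = phi r / r)
    (Tp Tm dzp dzm Δρ a a' ν : ℝ)
    (hTp : 0 < Tp) (hTm : 0 < Tm) (hdzp : 0 < dzp) (hdzm : 0 < dzm)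
    (hΔρ : 0 < Δρ) (ha : 0 < a) (ha' : 0 < a') (hν : 0 < ν)
    (μ : ℝ → ℝ) (hμdiff : Differentiable ℝ μ) (hμpos : ∀ t, 0 < μ t)
    (hμanti : Antitone μ) :
    Antitone (fun t =>
      Tp * ((1 - phi ((Tm * dzm) / (Tp * dzp))) * hmob a (μ t)
              + phi ((Tm * dzm) / (Tp * dzp)) * hmob a' (μ t)) * Δρ * dzp
        - Tm * ((1 - phi ((Tp * dzp) / (Tm * dzm))) * hmob a' ν
              + phi ((Tp * dzp) / (Tm * dzm)) * hmob a' (μ t)) * Δρ * dzm) := by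
  have hP : 0 < Tp * dzp := mul_pos hTp hdzp
  have hQ : 0 < Tm * dzm := mul_pos hTm hdzm
  have hr : 0 < (Tm * dzm) / (Tp * dzp) := div_pos hQ hP
  have hcancel : Tm * dzm * phi ((Tp * dzp) / (Tm * dzm))
      = Tp * dzp * phi ((Tm * dzm) / (Tp * dzp)) := by
    have h := hphi_sym _ hr
    rw [one_div_div] at h
    rw [h]
    field_simp
  have hle := (hphi_mem _ hr).2
  generalize phi ((Tp * dzp) / (Tm * dzm)) = wm at *
  generalize phi ((Tm * dzm) / (Tp * dzp)) = wp at *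
  intro s t hst
  have hmono := hmob_le_hmob ha (hμpos t) (hμanti hst)
  have hcoef : 0 ≤ Tp * dzp * (1 - wp) * Δρ :=
    mul_nonneg (mul_nonneg hP.le (sub_nonneg.2 hle)) hΔρ.le
  have key := mul_le_mul_of_nonneg_left hmono hcoef
  -- The last term is zero by `hcancel` and removes the cross terms from the difference.
  linear_combination key + Δρ * (hmob a' (μ s) - hmob a' (μ t)) * hcancel
end
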